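/- Under the Pearlian semantics, probabilities of counterfactuals in nondeterministic causal models are not identified by the observational and interventional distributions: let M be the causal model with binary endogenous X and Y, graph X → Y, P(Y=1 | X=1) = p and P(Y=1 | X=0) = q with 0 < p < q < 1, p + q ≤ 1, and P(X=1, Y=1) > 0. Let M' be the canonical SCM of M with P(U_Y = 0) = p, P(U_Y = 1) = q, P(U_Y = 2) = 1 − p − q, P(U_Y = 3) = 0, and let M'' be the canonical SCM with P(U_Y = 0) = 0, P(U_Y = 1) = q − p, P(U_Y = 2) = 1 − q, P(U_Y = 3) = p. Then both M' and M'' are canonical SCMs for M, yet P_{M'}((Y=0)_{X←0} | X=1, Y=1) = 1 while P_{M''}((Y=0)_{X←0} | X=1, Y=1) = 0. -/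

import Mathlib

/-!
In a canonical SCM of `M2` a world is determined, up to probability zero, by the values `a` and `f`
of the two response variables, and the counterfactual `(Y = 0)_{X ← 0}` holds in it exactly when
`f 0 = 0` (`cfBasic_eq`). The evidence `X = 1, Y = 1` only says `a = 1` and `f 1 = 1`, so it leaves
the two response functions `Y = X` and `Y = 1`. The marginals `P(f 0 = 1) = q` and `P(f 1 = 1) = p`
do not determine how the mass `p` of `f 1 = 1` is split between these two: the first model puts it
all on `Y = X`, where the counterfactual is true, the second all on `Y = 1`, where it is false.

A distribution of the response function of `Y` is represented by a table `r : Bool → Bool → ℝ`, with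
`r (f 0) (f 1) = P(U_Y = f)`.
-/

open Finset

noncomputable section

attribute [local instance] Classical.propDecidable

/-- An assignment of values to the variables. -/
abbrev Asg {ν : Type} (Val : ν → Type) : Type := (i : ν) → Val i

/-- A probabilistic causal model (a causal Bayesian network with explicit exogenous
variables): a signature (variables `ν` with value sets `Val`), a graph given by the
parent map `pa` (with `ord` a witness of acyclicity, and the variables in `exo` being
the roots), and a joint probability distribution that is Markov relative to the graph,
presented by the conditional probability table `cpt i w x = P(i = x | pa i = w|_{pa i})`
of each variable given its parents (for exogenous variables this is the marginal). -/
structure CM (ν : Type) (Val : ν → Type) : Type where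
  exo : Finset ν
  pa : ν → Finset ν
  ord : ν → ℕ
  cpt : (i : ν) → Asg Val → Val i → ℝ

/-- A basic counterfactual event `(Y = yv)_{X ← xv}`. -/
structure CFEvent (ν : Type) (Val : ν → Type) : Type where
  X : Finset ν
  xv : Asg Val
  Y : Finset ν
  yv : Asg Val

namespace CM

variable {ν : Type} {Val : ν → Type}

/-- Well-formedness of a causal model: exogenous variables are roots, the graph is
acyclic, the conditional probability table of each variable depends only on its
parents, and each table is a probability distribution. -/
structure WF [Fintype ν] [∀ i, Fintype (Val i)] (M : CM ν Val) : Prop where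
  pa_exo : ∀ i ∈ M.exo, M.pa i = ∅
  acyclic : ∀ i j, j ∈ M.pa i → M.ord j < M.ord i
  cpt_pa : ∀ (i : ν) (w w' : Asg Val) (x : Val i),
    (∀ j ∈ M.pa i, w j = w' j) → M.cpt i w x = M.cpt i w' x
  cpt_nonneg : ∀ i w x, 0 ≤ M.cpt i w x
  cpt_sum : ∀ i w, ∑ x, M.cpt i w x = 1

variable [Fintype ν] [∀ i, Fintype (Val i)] [∀ i, Nonempty (Val i)]

variable (M : CM ν Val)

/-- The joint distribution `P(U = u, V = v)` (Markov factorization). -/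
def joint (w : Asg Val) : ℝ := ∏ i, M.cpt i w (w i)

/-- The interventional distribution `P_{do(X = xv)}` (truncated factorization). -/
def pdo (X : Finset ν) (xv w : Asg Val) : ℝ :=
  if ∀ i ∈ X, w i = xv i then ∏ i ∈ Xᶜ, M.cpt i w (w i) else 0

/-- `P_{do(X = xv)}(Y = yv | U = u)`, where `u` is the exogenous part of `w`:
the probability of the basic counterfactual `(Y = yv)_{X ← xv}` given the world `w`. -/
def cfBasic (X : Finset ν) (xv : Asg Val) (Y : Finset ν) (yv : Asg Val) (w : Asg Val) : ℝ :=
  (∑ w' : Asg Val,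
      if (∀ i ∈ M.exo, w' i = w i) ∧ ∀ i ∈ Y, w' i = yv i then M.pdo X xv w' else 0) /
  (∑ w' : Asg Val, if ∀ i ∈ M.exo, w' i = w i then M.pdo X xv w' else 0)

/-- The probability of a complex counterfactual
`P(y_x, …, z_w) = Σ_{(u,v)} P(y_x | u,v) ⋯ P(z_w | u,v) P(u,v)`. -/
def cfProb (evs : List (CFEvent ν Val)) : ℝ :=
  ∑ w : Asg Val, (evs.map fun e => M.cfBasic e.X e.xv e.Y e.yv w).prod * M.joint w

/-- Conditional probability of a complex counterfactual given an actual event `Z = zv`: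
`P(y_x, …, z_w | Z = zv) = P(y_x, …, z_w, Z = zv) / P(Z = zv)`. -/
def cfProbCond (evs : List (CFEvent ν Val)) (Z : Finset ν) (zv : Asg Val) : ℝ :=
  (∑ w : Asg Val,
      (if ∀ i ∈ Z, w i = zv i then (evs.map fun e => M.cfBasic e.X e.xv e.Y e.yv w).prod
       else 0) * M.joint w) /
  (∑ w : Asg Val, if ∀ i ∈ Z, w i = zv i then M.joint w else 0)

/-- `M` is a structural causal model: every endogenous variable is a deterministic
function of its parents (the exogenous variables are automatically mutually
independent in this presentation). -/
def IsSCM : Prop :=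
  ∀ i ∉ M.exo, ∀ (w : Asg Val) (x : Val i), M.cpt i w x = 0 ∨ M.cpt i w x = 1

/-- The actualized refinement `M^{(u,v)}` of `M` at the actual world `a`:
for each endogenous variable, the conditional distribution given the *actual* values of
its parents is replaced by the point mass at the actual value of the variable. -/
def refine (a : Asg Val) : CM ν Val where
  exo := M.exo
  pa := M.pa
  ord := M.ord
  cpt := fun i w x =>
    if i ∉ M.exo ∧ ∀ j ∈ M.pa i, w j = a j then (if x = a i then 1 else 0)
    else M.cpt i w x

/-- The B-semantics probability of a basic counterfactual,
`P^B((Y = yv)_{X ← xv} | a) = (P^{a})_{do(X = xv)}(Y = yv | U = u)` where `u` is the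
exogenous part of the actual world `a`. -/
def pbBasic (a : Asg Val) (X : Finset ν) (xv : Asg Val) (Y : Finset ν) (yv : Asg Val) : ℝ :=
  (M.refine a).cfBasic X xv Y yv a

/-- The B-semantics probability of a complex counterfactual. -/
def pbProb (evs : List (CFEvent ν Val)) : ℝ :=
  ∑ w : Asg Val, (evs.map fun e => M.pbBasic w e.X e.xv e.Y e.yv).prod * M.joint w

/-- The conditional B-semantics probability of a complex counterfactual given `Z = zv`. -/
def pbProbCond (evs : List (CFEvent ν Val)) (Z : Finset ν) (zv : Asg Val) : ℝ :=
  (∑ w : Asg Val,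
      (if ∀ i ∈ Z, w i = zv i then (evs.map fun e => M.pbBasic w e.X e.xv e.Y e.yv).prod
       else 0) * M.joint w) /
  (∑ w : Asg Val, if ∀ i ∈ Z, w i = zv i then M.joint w else 0)

/-- An assignment of values to the parents of `i`. -/
def PaAsg (i : ν) : Type := (j : {j : ν // j ∈ M.pa i}) → Val j.1

instance (i : ν) : Fintype (M.PaAsg i) := by unfold PaAsg; infer_instance
instance (i : ν) : Nonempty (M.PaAsg i) := ⟨fun j => Classical.arbitrary (Val j.1)⟩

/-- Extend an assignment of the parents of `i` to a full assignment (arbitrarily). -/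
def extendPa (i : ν) (κ : M.PaAsg i) : Asg Val :=
  fun j => if h : j ∈ M.pa i then κ ⟨j, h⟩ else Classical.arbitrary (Val j)

/-- The index type of the potential outcome variables `X_{pa_X}` of the PO-SCM:
one for each endogenous variable `X` and each value `pa_X` of its parents. -/
def POI : Type := Σ i : {i : ν // i ∉ M.exo}, M.PaAsg i.1

instance : Fintype (POI M) := by unfold POI; infer_instance

/-- The value set of the potential outcome variable `X_{pa_X}` is that of `X`. -/
def POB : POI M → Type := fun p => Val p.1.1

instance (p : POI M) : Fintype (POB M p) := by unfold POB; infer_instance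
instance (p : POI M) : Nonempty (POB M p) := by unfold POB; infer_instance

/-- The type of values of the response variable `U_X` of the canonical frame:
functions from values of the parents of `X` to values of `X`. -/
def RType (i : ν) : Type := M.PaAsg i → Val i

instance (i : ν) : Fintype (M.RType i) := by unfold RType; infer_instance
instance (i : ν) : Nonempty (M.RType i) := ⟨fun _ => Classical.arbitrary (Val i)⟩

/-- The index type of the response variables of the canonical frame:
one for each endogenous variable. -/
def RVI : Type := {i : ν // i ∉ M.exo}

instance : Fintype (RVI M) := by unfold RVI; infer_instance

/-- The value set of the response variable `U_X`. -/
def RB : RVI M → Type := fun p => M.RType p.1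

instance (p : RVI M) : Fintype (RB M p) := by unfold RB; infer_instance
instance (p : RVI M) : Nonempty (RB M p) := by unfold RB; infer_instance

end CM

/-- The family of value sets of an extended signature `ν ⊕ β`. -/
def SumVal {ν β : Type} (Val : ν → Type) (B : β → Type) : ν ⊕ β → Type := fun i =>
  match i with
  | .inl j => Val j
  | .inr b => B b

section SumValInst

variable {ν β : Type} {Val : ν → Type} {B : β → Type}

instance [∀ i, Fintype (Val i)] [∀ b, Fintype (B b)] (i : ν ⊕ β) :
    Fintype (SumVal Val B i) := by
  cases i with
  | inl j => exact inferInstanceAs (Fintype (Val j))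
  | inr b => exact inferInstanceAs (Fintype (B b))

instance [∀ i, Nonempty (Val i)] [∀ b, Nonempty (B b)] (i : ν ⊕ β) :
    Nonempty (SumVal Val B i) := by
  cases i with
  | inl j => exact inferInstanceAs (Nonempty (Val j))
  | inr b => exact inferInstanceAs (Nonempty (B b))

/-- Lift an assignment on `ν` to one on `ν ⊕ β` (arbitrary on the new variables). -/
def liftAsg [∀ b, Nonempty (B b)] (xv : Asg Val) : Asg (SumVal Val B) := fun i =>
  match i with
  | .inl j => xv j
  | .inr b => Classical.arbitrary (B b)

/-- Lift a counterfactual event on the original variables to the extended signature. -/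
def liftCFEvent [∀ b, Nonempty (B b)] (e : CFEvent ν Val) : CFEvent (ν ⊕ β) (SumVal Val B) :=
  ⟨e.X.image Sum.inl, liftAsg e.xv, e.Y.image Sum.inl, liftAsg e.yv⟩

variable [Fintype ν] [Fintype β] [∀ i, Fintype (Val i)] [∀ b, Fintype (B b)]
  [∀ i, Nonempty (Val i)] [∀ b, Nonempty (B b)]

/-- The probability, computed in a model `N` over an extended signature, of a complex
counterfactual over the original variables. -/
def extProb (N : CM (ν ⊕ β) (SumVal Val B)) (evs : List (CFEvent ν Val)) : ℝ :=
  N.cfProb (evs.map liftCFEvent)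

/-- The probability, computed in a model `N` over an extended signature, of a complex
counterfactual over the original variables, conditional on an actual event `Z = zv`
over the original variables. -/
def extProbCond (N : CM (ν ⊕ β) (SumVal Val B)) (evs : List (CFEvent ν Val))
    (Z : Finset ν) (zv : Asg Val) : ℝ :=
  N.cfProbCond (evs.map liftCFEvent) (Z.image Sum.inl) (liftAsg zv)

/-- The probability, computed in a model `N` over an extended signature, of a basic
counterfactual conditional on the values `a` of *all* the original variables
(marginalizing over the added exogenous variables), via the law of total probability. -/
def extBasicCond (N : CM (ν ⊕ β) (SumVal Val B)) (a : Asg Val)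
    (X : Finset ν) (xv : Asg Val) (Y : Finset ν) (yv : Asg Val) : ℝ :=
  (∑ w : Asg (SumVal Val B),
      if ∀ i : ν, w (Sum.inl i) = a i then
        N.cfBasic (X.image Sum.inl) (liftAsg xv) (Y.image Sum.inl) (liftAsg yv) w * N.joint w
      else 0) /
  (∑ w : Asg (SumVal Val B), if ∀ i : ν, w (Sum.inl i) = a i then N.joint w else 0)

end SumValInst

namespace CM

variable {ν : Type} {Val : ν → Type} [Fintype ν] [∀ i, Fintype (Val i)] [∀ i, Nonempty (Val i)]
variable (M : CM ν Val)

/-- The PO-SCM `M^N` of `M`: the structural causal model obtained from `M` by adding,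
for each endogenous variable `X` and each value `pa_X` of its parents, an exogenous
potential outcome variable `X_{pa_X}` (with marginal `P_M(X | Pa_X = pa_X)`, all
exogenous variables mutually independent), and the structural equation
`X = X_{pa_X}` whenever `Pa_X = pa_X`. -/
def MN : CM (ν ⊕ POI M) (SumVal Val (POB M)) where
  exo := (M.exo.image Sum.inl) ∪ (univ.image Sum.inr)
  pa := fun i =>
    match i with
    | .inl j => ((M.pa j).image Sum.inl) ∪
        ((univ.filter fun p : POI M => p.1.1 = j).image Sum.inr)
    | .inr _ => ∅
  ord := fun i =>
    match i with
    | .inl j => M.ord j + 1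
    | .inr _ => 0
  cpt := fun i =>
    match i with
    | .inl j => fun w x =>
        if h : j ∈ M.exo then M.cpt j (fun k => w (Sum.inl k)) x
        else if x = w (Sum.inr ⟨⟨j, h⟩, fun k => w (Sum.inl k.1)⟩) then 1 else 0
    | .inr p => fun _ x => M.cpt p.1.1 (M.extendPa p.1.1 p.2) x

/-- `P^N(y_x, …, z_w)`: the probability of a complex counterfactual computed in the
PO-SCM `M^N`. -/
def pnProb (evs : List (CFEvent ν Val)) : ℝ := extProb M.MN evs

/-- `P^N(y_x, …, z_w | Z = zv)`: the conditional probability of a complex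
counterfactual computed in the PO-SCM `M^N`, given an actual event on the
endogenous variables. -/
def pnProbCond (evs : List (CFEvent ν Val)) (Z : Finset ν) (zv : Asg Val) : ℝ :=
  extProbCond M.MN evs Z zv

/-- `P^N((Y = yv)_{X ← xv} | U = u, V = v)`: the probability of a basic counterfactual
computed in the PO-SCM `M^N`, conditional on the exogenous and endogenous variables of
`M` only (marginalizing over the potential outcome variables). -/
def pnBasicCond (a : Asg Val) (X : Finset ν) (xv : Asg Val) (Y : Finset ν) (yv : Asg Val) : ℝ :=
  extBasicCond M.MN a X xv Y yv

/-- A canonical SCM for `M`, determined by a distribution `q` of the response variables: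
the SCM over the canonical frame, which adds for each endogenous variable `X` an
exogenous response variable `U_X` ranging over the functions `f_X : R(Pa_X) → R(X)`,
with the structural equation `X = f_X(Pa_X)` where `f_X` is the value of `U_X`. -/
def canonSCM (q : (p : RVI M) → RType M p.1 → ℝ) : CM (ν ⊕ RVI M) (SumVal Val (RB M)) where
  exo := (M.exo.image Sum.inl) ∪ (univ.image Sum.inr)
  pa := fun i =>
    match i with
    | .inl j => ((M.pa j).image Sum.inl) ∪
        ((univ.filter fun p : RVI M => p.1 = j).image Sum.inr)
    | .inr _ => ∅
  ord := fun i =>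
    match i with
    | .inl j => M.ord j + 1
    | .inr _ => 0
  cpt := fun i =>
    match i with
    | .inl j => fun w x =>
        if h : j ∈ M.exo then M.cpt j (fun k => w (Sum.inl k)) x
        else if x = w (Sum.inr ⟨j, h⟩) (fun k => w (Sum.inl k.1)) then 1 else 0
    | .inr p => fun _ x => q p x

/-- `q` is the distribution of the response variables of a canonical SCM for `M`:
it is a probability distribution (the response variables being mutually independent and
independent of the exogenous variables of `M`, whose distribution is kept), and it
reproduces the conditional probability tables of `M`:
`P_M(X = x | Pa_X = pa_X) = Σ_{f_X with f_X(pa_X) = x} P(U_X = f_X)`. -/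
def IsCanonicalDist (q : (p : RVI M) → RType M p.1 → ℝ) : Prop :=
  (∀ p x, 0 ≤ q p x) ∧ (∀ p, ∑ f, q p f = 1) ∧
  ∀ (p : RVI M) (κ : M.PaAsg p.1) (x : Val p.1),
    M.cpt p.1 (M.extendPa p.1 κ) x = ∑ f ∈ univ.filter (fun f : RType M p.1 => f κ = x), q p f

/-- The distribution of the response variables of the GH-SCM:
`P(U_X = f_X) = ∏_{pa_X} P_M(X = f_X(pa_X) | Pa_X = pa_X)`. -/
def qGH : (p : RVI M) → RType M p.1 → ℝ := fun p f =>
  ∏ κ : M.PaAsg p.1, M.cpt p.1 (M.extendPa p.1 κ) (f κ)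

end CM

/-- A default assignment. -/
def dfltAsg {ν : Type} (Val : ν → Type) [∀ i, Nonempty (Val i)] : Asg Val :=
  fun i => Classical.arbitrary (Val i)

/-- The causal model of Example 2: binary endogenous variables `X` (index `false`) and
`Y` (index `true`) with graph `X → Y`, `P(X=1) = px1`, `P(Y=1 | X=1) = p` and
`P(Y=1 | X=0) = q` (the exogenous variables determining `X` are left implicit:
`X` has no parents). Values: `true` is `1`, `false` is `0`. -/
def M2 (p q px1 : ℝ) : CM Bool (fun _ => Bool) where
  exo := ∅
  pa := fun i => match i with
    | false => ∅
    | true => {false}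
  ord := fun i => match i with
    | false => 0
    | true => 1
  cpt := fun i => match i with
    | false => fun _ b => if b then px1 else 1 - px1
    | true => fun w b =>
        if w false then (if b then p else 1 - p) else (if b then q else 1 - q)

/-- The response variable `U_Y` of the canonical frame of `M2`. -/
def yRVI (p q px1 : ℝ) : CM.RVI (M2 p q px1) :=
  ⟨true, by show true ∉ (∅ : Finset Bool); simp⟩

/-- The unique parent of `Y` in `M2`, as an element of the index type of the values of
the parents of `Y`. -/
def xPa (p q px1 : ℝ) : {j : Bool // j ∈ (M2 p q px1).pa true} :=
  ⟨false, by show false ∈ ({false} : Finset Bool); simp⟩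

/-- `U_Y = 0`: `Y = X`. -/
def fId (p q px1 : ℝ) : CM.RType (M2 p q px1) true := fun κ => κ (xPa p q px1)

/-- `U_Y = 1`: `Y = ¬X`. -/
def fNeg (p q px1 : ℝ) : CM.RType (M2 p q px1) true := fun κ => !(κ (xPa p q px1))

/-- `U_Y = 2`: `Y = 0`. -/
def fC0 (p q px1 : ℝ) : CM.RType (M2 p q px1) true := fun _ => false

/-- `U_Y = 3`: `Y = 1`. -/
def fC1 (p q px1 : ℝ) : CM.RType (M2 p q px1) true := fun _ => true

section Canonical

variable {ν : Type} {Val : ν → Type} [Fintype ν] (M : CM ν Val)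

lemma canonSCM_cpt_inl (r : (j : CM.RVI M) → CM.RType M j.1 → ℝ) (j : ν) (hj : j ∉ M.exo)
    (w : Asg (SumVal Val (CM.RB M))) (x : Val j) :
    (M.canonSCM r).cpt (.inl j) w x =
      if x = (w (.inr ⟨j, hj⟩) : CM.RType M j) (fun k => w (.inl k.1)) then 1 else 0 := by
  simp only [CM.canonSCM]
  rw [dif_neg hj]
  rfl

lemma mem_canonSCM_exo (hM : M.exo = ∅) (r : (j : CM.RVI M) → CM.RType M j.1 → ℝ)
    (i : ν ⊕ CM.RVI M) : i ∈ (M.canonSCM r).exo ↔ ∃ j, Sum.inr j = i := by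
  simp [CM.canonSCM, hM]

/-- The instances on worlds and on the evidence `E` are arbitrary, since those inferred for a
concrete signature differ from the classical ones built into `extProbCond`. -/
lemma extProbCond_singleton [∀ i, Fintype (Val i)] [∀ i, Nonempty (Val i)]
    {β : Type} {B : β → Type} [Fintype β] [∀ b, Fintype (B b)] [∀ b, Nonempty (B b)]
    (N : CM (ν ⊕ β) (SumVal Val B)) (e : CFEvent ν Val) (Z : Finset ν)
    (zv : Asg Val) (E : Asg (SumVal Val B) → Prop)
    [DecidablePred E] [Fintype (Asg (SumVal Val B))] (hE : ∀ w, E w ↔ ∀ j ∈ Z, w (.inl j) = zv j)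
    (e' : CFEvent (ν ⊕ β) (SumVal Val B)) (he' : e' = liftCFEvent e) :
    extProbCond N [e] Z zv =
      (∑ w, if E w then N.cfBasic e'.X e'.xv e'.Y e'.yv w * N.joint w else 0) /
        ∑ w, if E w then N.joint w else 0 := by
  have hZ : ∀ w : Asg (SumVal Val B),
      (∀ i ∈ Z.image Sum.inl, w i = (liftAsg zv : Asg (SumVal Val B)) i) ↔ E w := by
    intro w
    rw [hE, Finset.forall_mem_image]
    rfl
  subst he'
  simp only [extProbCond, CM.cfProbCond, hZ, List.map_cons, List.map_nil, List.prod_cons,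
    List.prod_nil, mul_one, ite_mul, zero_mul]
  congr!

end Canonical

namespace M2

variable {p q px1 : ℝ}

/-- The response variable `U_X` of the canonical frame of `M2`. -/
def xRVI (p q px1 : ℝ) : CM.RVI (M2 p q px1) :=
  ⟨false, by show false ∉ (∅ : Finset Bool); simp⟩

/-- The assignment giving every parent of `i` the value `b`. For `i = true` this is `X = b`; for
`i = false` there are no parents and `b` is irrelevant. -/
def constPa (i b : Bool) : (M2 p q px1).PaAsg i := fun _ => b

lemma paAsg_false (κ : (M2 p q px1).PaAsg false) : κ = constPa false false := by
  funext ⟨j, hj⟩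
  exact absurd hj (by show j ∉ (∅ : Finset Bool); simp)

lemma paAsg_true (κ : (M2 p q px1).PaAsg true) : κ = constPa true (κ (xPa p q px1)) := by
  funext ⟨j, hj⟩
  have h : j = false := by
    have h' : j ∈ ({false} : Finset Bool) := hj
    simpa using h'
  subst h
  rfl

/-- A response function of `X`, which has no parents, is a value of `X`. -/
def respX : CM.RType (M2 p q px1) false ≃ Bool where
  toFun a := a (constPa false false)
  invFun b := fun _ => b
  left_inv a := by funext κ; rw [paAsg_false κ]
  right_inv _ := rfl

/-- A response function `f` of `Y` is the pair `(f 0, f 1)`. -/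
def respY : CM.RType (M2 p q px1) true ≃ Bool × Bool where
  toFun f := (f (constPa true false), f (constPa true true))
  invFun b := fun κ => if κ (xPa p q px1) = true then b.2 else b.1
  left_inv f := by
    funext κ
    obtain ⟨b, hb⟩ : ∃ b, κ = constPa true b := ⟨_, paAsg_true κ⟩
    subst hb
    cases b <;> simp [constPa]
  right_inv b := by simp [constPa]

/-- The distribution of the response variables with `P(U_X = 1) = px1` and
`P(U_Y = f) = r (f 0) (f 1)`. -/
def respDist (r : Bool → Bool → ℝ) :
    (pp : CM.RVI (M2 p q px1)) → CM.RType (M2 p q px1) pp.1 → ℝ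
  | ⟨false, _⟩, a => if respX a = true then px1 else 1 - px1
  | ⟨true, _⟩, f => r (respY f).1 (respY f).2

/-- The conditions on `r` say that its marginals are those prescribed by `M2`. -/
lemma isCanonicalDist_respDist (hpx0 : 0 ≤ px1) (hpx1 : px1 ≤ 1) (r : Bool → Bool → ℝ)
    (hr : ∀ b c, 0 ≤ r b c)
    (hr0 : r true false + r true true = q) (hr0' : r false false + r false true = 1 - q)
    (hr1 : r false true + r true true = p) :
    (M2 p q px1).IsCanonicalDist (respDist r) := by
  refine ⟨?_, ?_, ?_⟩
  · rintro ⟨i | i, hi⟩ f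
    · simp only [respDist]
      split_ifs <;> linarith
    · exact hr _ _
  · rintro ⟨i | i, hi⟩
    · rw [← respX.symm.sum_comp]
      simp [respDist]
    · rw [← respY.symm.sum_comp]
      simp only [respDist, Equiv.apply_symm_apply, Fintype.sum_prod_type, Fintype.sum_bool]
      linarith
  · rintro ⟨i | i, hi⟩ κ x
    · rw [Finset.sum_filter, ← respX.symm.sum_comp]
      change (if x = true then px1 else 1 - px1) = _
      have hs : ∀ b : Bool, (respX.symm b : CM.RType (M2 p q px1) false) κ = x ↔ b = x :=
        fun _ => Iff.rfl
      cases x <;> simp [respDist, hs]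
    · obtain ⟨b, hb⟩ : ∃ b, κ = constPa true b := ⟨_, paAsg_true κ⟩
      subst hb
      have hpa : false ∈ (M2 p q px1).pa true := (xPa p q px1).2
      have hext : (M2 p q px1).extendPa true (constPa true b) false = b := by
        simp [CM.extendPa, hpa, constPa]
      have hcpt : (M2 p q px1).cpt true ((M2 p q px1).extendPa true (constPa true b)) x =
          if b then (if x then p else 1 - p) else (if x then q else 1 - q) := by
        conv_rhs => rw [← hext]
        rfl
      rw [Finset.sum_filter, ← respY.symm.sum_comp]
      refine hcpt.trans ?_
      have hs : ∀ c : Bool × Bool, (respY.symm c : CM.RType (M2 p q px1) true) (constPa true b) = x ↔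
          (if b = true then c.2 else c.1) = x := fun _ => Iff.rfl
      cases b <;> cases x <;> simp [respDist, hs, Fintype.sum_prod_type] <;> linarith

/-- A world of the canonical frame of `M2`: values of `X`, `Y`, `U_X` and `U_Y`. -/
abbrev World (p q px1 : ℝ) : Type := Asg (SumVal (fun _ : Bool => Bool) (CM.RB (M2 p q px1)))

/-- The value of `X` in a world. -/
def wX (w : World p q px1) : Bool := w (Sum.inl false)

/-- The value of `Y` in a world. -/
def wY (w : World p q px1) : Bool := w (Sum.inl true)

/-- The value of `U_X` in a world. -/
def wA (w : World p q px1) : CM.RType (M2 p q px1) false := w (Sum.inr (xRVI p q px1))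

/-- The value of `U_Y` in a world. -/
def wF (w : World p q px1) : CM.RType (M2 p q px1) true := w (Sum.inr (yRVI p q px1))

/-- The value that the response function `U_Y` of a world gives to `Y` when `X = b`. -/
def respF (w : World p q px1) (b : Bool) : Bool := wF w (constPa true b)

/-- The world with given values of `X`, `Y`, `U_X` and `U_Y`. -/
def mkW (x y : Bool) (a : CM.RType (M2 p q px1) false) (f : CM.RType (M2 p q px1) true) :
    World p q px1
  | .inl false => x
  | .inl true => y
  | .inr ⟨false, _⟩ => a
  | .inr ⟨true, _⟩ => f

lemma mkW_eta (w : World p q px1) : mkW (wX w) (wY w) (wA w) (wF w) = w := by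
  funext i
  rcases i with (_ | _) | ⟨_ | _, _⟩ <;> rfl

lemma univ_RVI : (univ : Finset (CM.RVI (M2 p q px1))) = {xRVI p q px1, yRVI p q px1} := by
  ext ⟨i, hi⟩
  refine iff_of_true (Finset.mem_univ _) ?_
  cases i
  · exact Finset.mem_insert_self _ _
  · exact Finset.mem_insert_of_mem (Finset.mem_singleton_self _)

lemma xRVI_ne_yRVI : xRVI p q px1 ≠ yRVI p q px1 := by
  intro h
  have := congrArg Subtype.val h
  simp [xRVI, yRVI] at this

lemma prod_vars (F : Bool ⊕ CM.RVI (M2 p q px1) → ℝ) :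
    ∏ i, F i = F (.inl false) * F (.inl true) *
      (F (.inr (xRVI p q px1)) * F (.inr (yRVI p q px1))) := by
  rw [Fintype.prod_sum_type, univ_RVI, Finset.prod_pair xRVI_ne_yRVI, Fintype.prod_bool,
    mul_comm (F (.inl true))]

lemma prod_vars_ne_X (S : Finset (Bool ⊕ CM.RVI (M2 p q px1))) (hS : ∀ i, i ∈ S ↔ i ≠ .inl false)
    (F : Bool ⊕ CM.RVI (M2 p q px1) → ℝ) :
    ∏ i ∈ S, F i = F (.inl true) * (F (.inr (xRVI p q px1)) * F (.inr (yRVI p q px1))) := by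
  rw [← Fintype.prod_ite_mem, prod_vars]
  simp [hS]

variable (r : Bool → Bool → ℝ)

/-- The canonical SCM of `M2` with response distribution `respDist r`. -/
abbrev scm (p q px1 : ℝ) (r : Bool → Bool → ℝ) := (M2 p q px1).canonSCM (respDist r)

/-- `P(U_X = wA w, U_Y = wF w)`. -/
def exoProb (w : World p q px1) : ℝ :=
  (if respX (wA w) = true then px1 else 1 - px1) * r (respY (wF w)).1 (respY (wF w)).2

lemma cpt_X (w : World p q px1) :
    (scm p q px1 r).cpt (.inl false) w (w (.inl false)) = if wX w = respX (wA w) then 1 else 0 := by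
  have h : (fun k => w (Sum.inl k.1) : (M2 p q px1).PaAsg false) = constPa false false :=
    paAsg_false _
  have hn : false ∉ (M2 p q px1).exo := (xRVI p q px1).2
  refine (canonSCM_cpt_inl _ _ _ hn w _).trans ?_
  refine if_congr ?_ rfl rfl
  change wX w = wA w (fun k => w (Sum.inl k.1)) ↔ _
  rw [h]
  rfl

lemma cpt_Y (w : World p q px1) :
    (scm p q px1 r).cpt (.inl true) w (w (.inl true)) =
      if wY w = respF w (wX w) then 1 else 0 := by
  have h : (fun k => w (Sum.inl k.1) : (M2 p q px1).PaAsg true) = constPa true (wX w) :=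
    paAsg_true _
  have hn : true ∉ (M2 p q px1).exo := (yRVI p q px1).2
  refine (canonSCM_cpt_inl _ _ _ hn w _).trans ?_
  refine if_congr ?_ rfl rfl
  change wY w = wF w (fun k => w (Sum.inl k.1)) ↔ _
  rw [h]
  rfl

lemma joint_eq (w : World p q px1) :
    (scm p q px1 r).joint w =
      (if wX w = respX (wA w) then 1 else 0) *
        (if wY w = respF w (wX w) then 1 else 0) * exoProb r w := by
  unfold CM.joint
  rw [prod_vars, cpt_X, cpt_Y]
  rfl

/-- The event `(Y = 0)_{X ← 0}`. -/
def ev : CFEvent Bool (fun _ => Bool) := ⟨{false}, fun _ => false, {true}, fun _ => false⟩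

/-- The event `(Y = 0)_{X ← 0}` over the variables of the canonical frame. -/
abbrev evL (p q px1 : ℝ) :
    CFEvent (Bool ⊕ CM.RVI (M2 p q px1)) (SumVal (fun _ : Bool => Bool) (CM.RB (M2 p q px1))) :=
  liftCFEvent ev

lemma pdo_eq (w : World p q px1) :
    (scm p q px1 r).pdo (evL p q px1).X (evL p q px1).xv w =
      if wX w = false ∧ wY w = respF w false then exoProb r w else 0 := by
  have hc : (∀ i ∈ (evL p q px1).X, w i = (evL p q px1).xv i) ↔ wX w = false := by
    simp only [liftCFEvent, ev, Finset.image_singleton, Finset.mem_singleton, forall_eq]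
    exact Iff.rfl
  have hprod : ∀ S : Finset (Bool ⊕ CM.RVI (M2 p q px1)), (∀ i, i ∈ S ↔ i ≠ .inl false) →
      ∏ i ∈ S, (scm p q px1 r).cpt i w (w i) =
        (if wY w = respF w (wX w) then 1 else 0) * exoProb r w := by
    intro S hS
    rw [prod_vars_ne_X S hS, cpt_Y]
    rfl
  unfold CM.pdo
  rw [hprod _ (by simp [liftCFEvent, ev])]
  simp only [hc]
  by_cases hx : wX w = false <;> simp [hx]

lemma agree_exo_iff (w w' : World p q px1) :
    (∀ i ∈ (scm p q px1 r).exo, w' i = w i) ↔ wA w' = wA w ∧ wF w' = wF w := by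
  simp only [mem_canonSCM_exo (M2 p q px1) rfl]
  constructor
  · intro h
    exact ⟨h _ ⟨_, rfl⟩, h _ ⟨_, rfl⟩⟩
  · rintro ⟨hA, hF⟩ i ⟨⟨_ | _, _⟩, rfl⟩
    · exact hA
    · exact hF

/-- The only world with the same exogenous part as `w` that has positive probability under
`do(X = 0)` is `mkW false (f 0) a f`. The quotient keeps the junk value `0` for exogenous values
of probability zero. -/
lemma cfBasic_eq (w : World p q px1) :
    (scm p q px1 r).cfBasic (evL p q px1).X (evL p q px1).xv (evL p q px1).Y
      (evL p q px1).yv w =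
      (if (respY (wF w)).1 = false then exoProb r w else 0) / exoProb r w := by
  have hY : ∀ w' : World p q px1,
      (∀ i ∈ (evL p q px1).Y, w' i = (evL p q px1).yv i) ↔ wY w' = false := by
    intro w'
    simp only [liftCFEvent, ev, Finset.image_singleton, Finset.mem_singleton, forall_eq]
    exact Iff.rfl
  set w₀ : World p q px1 := mkW false (respF w false) (wA w) (wF w) with hw₀
  have huniq : ∀ w' : World p q px1, w' ≠ w₀ → wA w' = wA w → wF w' = wF w →
      ¬ (wX w' = false ∧ wY w' = respF w' false) := by
    rintro w' hne hA hF ⟨hX, hY'⟩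
    apply hne
    rw [← mkW_eta w', hX, hY', respF, hA, hF]
    rfl
  have hX₀ : wX w₀ = false := rfl
  have hY₀ : wY w₀ = (respY (wF w)).1 := rfl
  have hA₀ : wA w₀ = wA w := rfl
  have hF₀ : wF w₀ = wF w := rfl
  have hY₀' : wY w₀ = respF w₀ false := rfl
  have he₀ : exoProb r w₀ = exoProb r w := rfl
  unfold CM.cfBasic
  simp only [agree_exo_iff, hY, pdo_eq]
  congr 1
  · rw [Finset.sum_eq_single w₀]
    · rw [if_pos (⟨hX₀, hY₀'⟩ : wX w₀ = false ∧ wY w₀ = respF w₀ false), he₀, hY₀]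
      simp [hA₀, hF₀]
    · intro w' _ hne
      split_ifs with h1 h2
      · exact absurd h2 (huniq w' hne h1.1.1 h1.1.2)
      · rfl
      · rfl
    · simp
  · rw [Finset.sum_eq_single w₀]
    · rw [if_pos (⟨hX₀, hY₀'⟩ : wX w₀ = false ∧ wY w₀ = respF w₀ false), he₀]
      simp [hA₀, hF₀]
    · intro w' _ hne
      split_ifs with h1 h2
      · exact absurd h2 (huniq w' hne h1.1 h1.2)
      · rfl
      · rfl
    · simp

/-- If every response function `f` with `f 1 = 1` of nonzero probability gives `(Y = 0)_{X ← 0}` the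
same truth value `v`, then `v` is its probability in each world with `X = Y = 1`, up to worlds of
probability zero, which the factor `joint w` removes. -/
lemma evidence_weight {v : ℝ} (hv : ∀ b, r b true ≠ 0 → v = if b = false then 1 else 0)
    (w : World p q px1) (hX : wX w = true) (hY : wY w = true) :
    (scm p q px1 r).cfBasic (evL p q px1).X (evL p q px1).xv (evL p q px1).Y
      (evL p q px1).yv w * (scm p q px1 r).joint w = v * (scm p q px1 r).joint w := by
  by_cases hj : (scm p q px1 r).joint w = 0
  · simp [hj]
  congr 1
  rw [joint_eq, hX, hY] at hj
  have h1 : (respY (wF w)).2 = true := by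
    by_contra h
    apply hj
    rw [if_neg (fun h' : true = respF w true => h h'.symm)]
    simp
  have he : exoProb r w ≠ 0 := right_ne_zero_of_mul hj
  have hr : r (respY (wF w)).1 true ≠ 0 := by
    have := right_ne_zero_of_mul he
    rwa [h1] at this
  rw [cfBasic_eq, hv _ hr]
  split_ifs <;> simp [he]

lemma joint_nonneg (hpx0 : 0 ≤ px1) (hpx1 : px1 ≤ 1) (hr : ∀ b c, 0 ≤ r b c)
    (w : World p q px1) : 0 ≤ (scm p q px1 r).joint w := by
  rw [joint_eq]
  have := hr (respY (wF w)).1 (respY (wF w)).2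
  have : 0 ≤ (if respX (wA w) = true then px1 else 1 - px1) := by split_ifs <;> linarith
  unfold exoProb
  positivity

/-- The response function `(b, 1)` is compatible with the evidence `X = 1, Y = 1`. -/
lemma evidence_pos (hpx0 : 0 < px1) (hpx1 : px1 ≤ 1) (hr : ∀ b c, 0 ≤ r b c) (b : Bool)
    (hb : 0 < r b true) :
    0 < ∑ w : World p q px1,
      if wX w = true ∧ wY w = true then (scm p q px1 r).joint w else 0 := by
  obtain ⟨w₁, hX, hY, hA, hF⟩ : ∃ w₁ : World p q px1, wX w₁ = true ∧ wY w₁ = true ∧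
      respX (wA w₁) = true ∧ respY (wF w₁) = (b, true) :=
    ⟨mkW true true (respX.symm true) (respY.symm (b, true)), rfl, rfl,
      respX.apply_symm_apply true, respY.apply_symm_apply (b, true)⟩
  refine Finset.sum_pos' (fun w _ => ?_) ⟨w₁, Finset.mem_univ _, ?_⟩
  · split_ifs
    · exact joint_nonneg r hpx0.le hpx1 hr w
    · exact le_rfl
  · have hF1 : respF w₁ true = true := congrArg Prod.snd hF
    rw [if_pos ⟨hX, hY⟩, joint_eq, hX, hY, hF1, exoProb, hA, hF]
    simpa using mul_pos hpx0 hb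

/-- If all response functions `f` with `f 1 = 1` of positive probability give `(Y = 0)_{X ← 0}` the
same truth value `v`, then `v` is its probability given `X = 1, Y = 1`. The value `b` exhibits one
such response function, so that the evidence has positive probability. -/
lemma extProbCond_eq (hpx0 : 0 < px1) (hpx1 : px1 ≤ 1) (hr : ∀ b c, 0 ≤ r b c) {v : ℝ}
    (hv : ∀ b, r b true ≠ 0 → v = if b = false then 1 else 0) (b : Bool) (hb : 0 < r b true) :
    extProbCond (scm p q px1 r) [ev] {false, true} (fun _ => true) = v := by
  have hZ : ∀ w : World p q px1, wX w = true ∧ wY w = true ↔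
      ∀ j ∈ ({false, true} : Finset Bool), w (.inl j) = true := by
    intro w
    simp only [Finset.mem_insert, Finset.mem_singleton, forall_eq_or_imp, forall_eq]
    exact Iff.rfl
  rw [extProbCond_singleton _ _ _ _ _ hZ (evL p q px1) rfl,
    div_eq_iff (evidence_pos r hpx0 hpx1 hr b hb).ne', Finset.mul_sum]
  refine Finset.sum_congr rfl fun w _ => ?_
  by_cases h : wX w = true ∧ wY w = true
  · rw [if_pos h, if_pos h, evidence_weight r hv w h.1 h.2]
  · rw [if_neg h, if_neg h, mul_zero]

/-- The table of `P(U_Y = f)` with values `a`, `b`, `c`, `d` at `Y = X`, `Y = 1 - X`, `Y = 0` and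
`Y = 1`. -/
def table (a b c d : ℝ) : Bool → Bool → ℝ
  | false, true => a
  | true, false => b
  | false, false => c
  | true, true => d

end M2

/-- Under the Pearlian semantics, probabilities of counterfactuals in nondeterministic
causal models are not identified by the observational and interventional distributions:
there are canonical SCMs `M'` (with `P(U_Y=0) = p`, `P(U_Y=1) = q`, `P(U_Y=2) = 1−p−q`,
`P(U_Y=3) = 0`) and `M''` (with `P(U_Y=0) = 0`, `P(U_Y=1) = q−p`, `P(U_Y=2) = 1−q`,
`P(U_Y=3) = p`) for `M2`, yet `P_{M'}((Y=0)_{X←0} | X=1, Y=1) = 1` while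
`P_{M''}((Y=0)_{X←0} | X=1, Y=1) = 0`. -/
theorem counterfactuals_not_identified (p q px1 : ℝ) (hp : 0 < p) (hpq : p < q)
    (hq : q < 1) (hpq1 : p + q ≤ 1) (hpx0 : 0 ≤ px1) (hpx1 : px1 ≤ 1)
    (hXY : 0 < ∑ w : Bool → Bool,
      if w false = true ∧ w true = true then (M2 p q px1).joint w else 0) :
    ∃ q1 q2 : (pp : CM.RVI (M2 p q px1)) → CM.RType (M2 p q px1) pp.1 → ℝ,
      (M2 p q px1).IsCanonicalDist q1 ∧ (M2 p q px1).IsCanonicalDist q2 ∧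
      q1 (yRVI p q px1) (fId p q px1) = p ∧
      q1 (yRVI p q px1) (fNeg p q px1) = q ∧
      q1 (yRVI p q px1) (fC0 p q px1) = 1 - p - q ∧
      q1 (yRVI p q px1) (fC1 p q px1) = 0 ∧
      q2 (yRVI p q px1) (fId p q px1) = 0 ∧
      q2 (yRVI p q px1) (fNeg p q px1) = q - p ∧
      q2 (yRVI p q px1) (fC0 p q px1) = 1 - q ∧
      q2 (yRVI p q px1) (fC1 p q px1) = p ∧
      extProbCond ((M2 p q px1).canonSCM q1)
        [⟨{false}, fun _ => false, {true}, fun _ => false⟩]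
        {false, true} (fun _ => true) = 1 ∧
      extProbCond ((M2 p q px1).canonSCM q2)
        [⟨{false}, fun _ => false, {true}, fun _ => false⟩]
        {false, true} (fun _ => true) = 0 := by
  have hpx : 0 < px1 := by
    refine lt_of_le_of_ne hpx0 fun h => hXY.ne' ?_
    refine Finset.sum_eq_zero fun w _ => ?_
    split_ifs with hw
    · simp [CM.joint, M2, hw.1, ← h]
    · rfl
  have h1 : ∀ b c, 0 ≤ M2.table p q (1 - p - q) 0 b c := by
    rintro (_ | _) (_ | _) <;> simp only [M2.table] <;> linarith
  have h2 : ∀ b c, 0 ≤ M2.table 0 (q - p) (1 - q) p b c := by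
    rintro (_ | _) (_ | _) <;> simp only [M2.table] <;> linarith
  refine ⟨M2.respDist (M2.table p q (1 - p - q) 0), M2.respDist (M2.table 0 (q - p) (1 - q) p),
    M2.isCanonicalDist_respDist hpx0 hpx1 _ h1 ?_ ?_ ?_,
    M2.isCanonicalDist_respDist hpx0 hpx1 _ h2 ?_ ?_ ?_,
    rfl, rfl, rfl, rfl, rfl, rfl, rfl, rfl,
    M2.extProbCond_eq _ hpx hpx1 h1 ?_ false hp,
    M2.extProbCond_eq _ hpx hpx1 h2 ?_ true hp⟩
  case refine_7 => rintro (_ | _) <;> simp [M2.table]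
  case refine_8 => rintro (_ | _) <;> simp [M2.table]
  all_goals simp only [M2.table]; ring

end
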